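/- Let ω₁ and ω₂ be Magri-compatible symplectic forms on a smooth manifold M with recursion operator N = ω₂♯ ω₁♭, and set I_k = (1/k) Tr(N^k). Then the functions I_k are in involution with respect to both Poisson brackets: {I_i, I_j}₁ = {I_i, I_j}₂ = 0 for all i, j, where { , }₁ and { , }₂ are the Poisson brackets associated with ω₁ and ω₂ respectively. -/

import Mathlib

/-!
At a point, write `P = N x` and `D_v = (dN)_x v`, and let `A v = D_v u` for a fixed vector `u`.
Vanishing of the Nijenhuis torsion says `D_{Pu} = P D_u + [A, P]`. Since
`dI_{k+1}(v) = Tr (P^k D_v)` and `Tr (P^k [A, P]) = 0`, this gives the Lenard recursion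
`dI_{k+1} = dI_k ∘ P`.

`P` is self-adjoint for both forms, and for an alternating form `ω` with `P` self-adjoint each
`ω(·, P^m ·)` is again skew, so `ω(z, P^m z) = 0`. If `z` and `w` are the Hamiltonian vectors of
`I_i` and `I_{i+m}`, then `ω(w, z) = dI_{i+m}(z) = dI_i(P^m z) = ω(z, P^m z) = 0`.
-/

open Module Set
noncomputable section

variable {E : Type*} [NormedAddCommGroup E] [NormedSpace ℝ E]

/-- The field of 2-forms `ω` is skew-symmetric at every point of `U`. -/
def IsSkewOn (ω : E → E →L[ℝ] E →L[ℝ] ℝ) (U : Set E) : Prop :=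
  ∀ x ∈ U, ∀ v : E, ω x v v = 0

/-- The field of 2-forms `ω` is nondegenerate at every point of `U`. -/
def IsNondegOn (ω : E → E →L[ℝ] E →L[ℝ] ℝ) (U : Set E) : Prop :=
  ∀ x ∈ U, ∀ v : E, (∀ w : E, ω x v w = 0) → v = 0

/-- The exterior derivative `dω` of the 2-form field `ω`, evaluated at `x` on
the vectors `u, v, w` (constant vector fields have vanishing brackets). -/
def extDeriv2 (ω : E → E →L[ℝ] E →L[ℝ] ℝ) (x u v w : E) : ℝ :=
  fderiv ℝ (fun y => ω y v w) x u - fderiv ℝ (fun y => ω y u w) x v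
    + fderiv ℝ (fun y => ω y u v) x w

/-- The 2-form field `ω` is closed on `U`. -/
def IsClosed2On (ω : E → E →L[ℝ] E →L[ℝ] ℝ) (U : Set E) : Prop :=
  ∀ x ∈ U, ∀ u v w : E, extDeriv2 ω x u v w = 0

/-- Lie bracket of two vector fields. -/
def lieVF (X Y : E → E) (x : E) : E := fderiv ℝ Y x (X x) - fderiv ℝ X x (Y x)

/-- `X` is a smooth section over `U` of the distribution `L`, i.e. `X ∈ Γ(L)`. -/
def TangentTo (L : E → Submodule ℝ E) (U : Set E) (X : E → E) : Prop :=
  ContDiffOn ℝ (⊤ : ℕ∞) X U ∧ ∀ x ∈ U, X x ∈ L x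

/-- `(L_X (ω♭ Y)) x w = X[ω(Y, w)](x) − ω(Y, [X, w])(x)`: the right-hand side in the
characterization `ω(∇^B_X Y, Z) = X[ω(Y,Z)] − ω(Y,[X,Z])` of the Bott connection,
with `Z` frozen to the constant vector field `w` (the expression is tensorial in `Z`). -/
def bottRHS (ω : E → E →L[ℝ] E →L[ℝ] ℝ) (X Y : E → E) (x w : E) : ℝ :=
  fderiv ℝ (fun y => ω y (Y y) w) x (X x) + ω x (Y x) (fderiv ℝ X x w)

/-- `B = ∇^B_X Y` is the Bott covariant derivative of `Y` along `X`:
`ω♭ B = L_X (ω♭ Y)`, i.e. `ω(B, Z) = X[ω(Y,Z)] − ω(Y,[X,Z])` for every `Z`;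
equivalently `B = ω♯ L_X (ω♭ Y)`. -/
def IsBottDeriv (ω : E → E →L[ℝ] E →L[ℝ] ℝ) (U : Set E) (X Y B : E → E) : Prop :=
  ∀ x ∈ U, ∀ w : E, ω x (B x) w = bottRHS ω X Y x w

/-- The covariant derivative `∇_X Y` of the linear connection with Christoffel map `Γ`. -/
def covDeriv (Γ : E → E →L[ℝ] E →L[ℝ] E) (X Y : E → E) (x : E) : E :=
  fderiv ℝ Y x (X x) + Γ x (X x) (Y x)

/-- The connection `Γ` is torsion-free on `U`
(`T(X,Y) = ∇_X Y − ∇_Y X − [X,Y] = 0`; tensorially, `Γ` is symmetric). -/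
def IsTorsionFreeOn (Γ : E → E →L[ℝ] E →L[ℝ] E) (U : Set E) : Prop :=
  ∀ x ∈ U, ∀ u v : E, Γ x u v = Γ x v u

/-- The connection `Γ` parallelizes `ω` on `U`:
`X[ω(Y,Z)] = ω(∇_X Y, Z) + ω(Y, ∇_X Z)` (tensorially, on constant fields). -/
def IsSymplecticConnOn (ω : E → E →L[ℝ] E →L[ℝ] ℝ)
    (Γ : E → E →L[ℝ] E →L[ℝ] E) (U : Set E) : Prop :=
  ∀ x ∈ U, ∀ u v w : E,
    fderiv ℝ (fun y => ω y v w) x u = ω x (Γ x u v) w + ω x v (Γ x u w)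

/-- The connection `Γ` preserves the distribution `L` on `U`:
`∇_X Y ∈ Γ(L)` for every `X ∈ Γ(TM)` and `Y ∈ Γ(L)`. -/
def PreservesOn (Γ : E → E →L[ℝ] E →L[ℝ] E) (L : E → Submodule ℝ E) (U : Set E) : Prop :=
  ∀ Y : E → E, ContDiffOn ℝ (⊤ : ℕ∞) Y U → (∀ x ∈ U, Y x ∈ L x) →
    ∀ x ∈ U, ∀ u : E, fderiv ℝ Y x u + Γ x u (Y x) ∈ L x

/-- The Nijenhuis torsion of the (1,1)-tensor field `N`, evaluated at `x` on `u, v`: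
`T_N(X,Y) = [NX,NY] − N[NX,Y] − N[X,NY] + N²[X,Y]` (tensorial, on constant fields). -/
def nijTorsion (N : E → E →L[ℝ] E) (x u v : E) : E :=
  lieVF (fun y => N y u) (fun y => N y v) x
    - N x (lieVF (fun y => N y u) (fun _ => v) x)
    - N x (lieVF (fun _ => u) (fun y => N y v) x)
    + N x (N x (lieVF (fun _ => u) (fun _ => v) x))

/-- `I_k = (1/k) Tr (N^k)`. -/
def traceInv (N : E → E →L[ℝ] E) (k : ℕ) (x : E) : ℝ :=
  (k : ℝ)⁻¹ * LinearMap.trace ℝ E ((N x ^ k : E →L[ℝ] E) : E →ₗ[ℝ] E)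

section LenardChain

variable {R M A : Type*} [CommRing R] [AddCommGroup M] [Module R M] [AddCommGroup A] [Module R A]
  {B : M →ₗ[R] M →ₗ[R] A} {P : Module.End R M} {f : ℕ → M →ₗ[R] A}

theorem isSelfAdjoint_pow (hP : B.IsSelfAdjoint P) (m : ℕ) :
    B.IsSelfAdjoint (P ^ m : Module.End R M) := by
  induction m with
  | zero => exact LinearMap.isAdjointPair_one
  | succ m ih =>
    have := hP.mul ih
    rwa [← pow_succ', ← pow_succ] at this

theorem isSelfAdjoint_of_isAlt_comp (hB : B.IsAlt) (hBP : (B ∘ₗ P).IsAlt) : B.IsSelfAdjoint P :=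
  fun u v => calc
    B (P u) v = -B (P v) u := (hBP.neg v u).symm
    _ = B u (P v) := hB.neg (P v) u

theorem isSelfAdjoint_comp (hP : B.IsSelfAdjoint P) : (B ∘ₗ P).IsSelfAdjoint P :=
  fun u v => hP (P u) v

theorem apply_pow_apply_self_eq_zero [IsAddTorsionFree A] (hB : B.IsAlt) (hP : B.IsSelfAdjoint P)
    (m : ℕ) (z : M) : B z ((P ^ m) z) = 0 := by
  rw [← self_eq_neg]
  calc B z ((P ^ m) z) = -B ((P ^ m) z) z := (hB.neg _ _).symm
    _ = -B z ((P ^ m) z) := congrArg Neg.neg (isSelfAdjoint_pow hP m z z)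

/-- A Lenard chain for the endomorphism `P`: a sequence of linear maps, here the differentials of
functions at a point, satisfying the Lenard recursion `f (k + 1) = P* (f k)`. -/
def IsLenardChain (P : Module.End R M) (f : ℕ → M →ₗ[R] A) : Prop :=
  ∀ k, f (k + 1) = f k ∘ₗ P

namespace IsLenardChain

theorem add_eq_comp_pow (hf : IsLenardChain P f) (k m : ℕ) : f (k + m) = f k ∘ₗ (P ^ m) := by
  induction m with
  | zero => rfl
  | succ m ih => rw [← add_assoc, hf, ih, pow_succ, Module.End.mul_eq_comp, LinearMap.comp_assoc]

theorem apply_add_eq_zero [IsAddTorsionFree A] (hf : IsLenardChain P f) (hB : B.IsAlt)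
    (hP : B.IsSelfAdjoint P) {i m : ℕ} {z w : M} (hz : B z = f i) (hw : B w = f (i + m)) :
    B w z = 0 :=
  calc B w z = f i ((P ^ m) z) := by rw [hw, hf.add_eq_comp_pow, LinearMap.comp_apply]
    _ = B z ((P ^ m) z) := by rw [hz]
    _ = 0 := apply_pow_apply_self_eq_zero hB hP m z

theorem apply_eq_zero [IsAddTorsionFree A] (hf : IsLenardChain P f) (hB : B.IsAlt)
    (hP : B.IsSelfAdjoint P) {i j : ℕ} {z w : M} (hz : B z = f i) (hw : B w = f j) :
    B z w = 0 := by
  rcases Nat.le_total i j with hij | hji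
  · obtain ⟨m, rfl⟩ := Nat.exists_eq_add_of_le hij
    exact hB.eq_iff.1 (hf.apply_add_eq_zero hB hP hz hw)
  · obtain ⟨m, rfl⟩ := Nat.exists_eq_add_of_le hji
    exact hf.apply_add_eq_zero hB hP hw hz

end IsLenardChain

end LenardChain

section Tracial

theorem map_mul_lie_eq_zero_of_commute {S G Φ : Type*} [Ring S] [AddGroup G] [FunLike Φ S G]
    [AddMonoidHomClass Φ S G] {φ : Φ} (hφ : ∀ a b, φ (a * b) = φ (b * a)) {a b : S}
    (hab : Commute a b) (c : S) : φ (a * ⁅c, b⁆) = 0 := by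
  rw [Ring.lie_def, mul_sub, map_sub, sub_eq_zero]
  calc φ (a * (c * b)) = φ (b * (a * c)) := by rw [← mul_assoc, hφ]
    _ = φ (a * (b * c)) := by rw [← mul_assoc, ← hab.eq, mul_assoc]

theorem fderiv_map_pow_of_map_mul_comm {𝕜 V F 𝔸 : Type*} [NontriviallyNormedField 𝕜]
    [NormedAddCommGroup V] [NormedSpace 𝕜 V] [NormedAddCommGroup F] [NormedSpace 𝕜 F]
    [NormedRing 𝔸] [NormedAlgebra 𝕜 𝔸]
    {φ : 𝔸 →L[𝕜] F} (hφ : ∀ a b, φ (a * b) = φ (b * a)) {g : V → 𝔸} {x : V}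
    (hg : DifferentiableAt 𝕜 g x) (n : ℕ) (v : V) :
    fderiv 𝕜 (fun y => φ (g y ^ n)) x v = n • φ (g x ^ (n - 1) * fderiv 𝕜 g x v) := by
  have hterm : ∀ i ∈ Finset.range n, φ (g x ^ (n - 1 - i) * fderiv 𝕜 g x v * g x ^ i) =
      φ (g x ^ (n - 1) * fderiv 𝕜 g x v) := by
    intro i hi
    have hin : i + (n - 1 - i) = n - 1 := by grind
    rw [hφ, ← mul_assoc, ← pow_add, hin]
  have hderiv := φ.hasFDerivAt.comp x (hg.hasFDerivAt.fun_pow' n)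
  calc fderiv 𝕜 (fun y => φ (g y ^ n)) x v
      = ∑ i ∈ Finset.range n, φ (g x ^ (n - 1 - i) * fderiv 𝕜 g x v * g x ^ i) := by
        simpa [Function.comp_def] using congrArg (· v) hderiv.fderiv
    _ = n • φ (g x ^ (n - 1) * fderiv 𝕜 g x v) := by
        rw [Finset.sum_congr rfl hterm, Finset.sum_const, Finset.card_range]

end Tracial

section Trace

variable (𝕜 V : Type*) [NontriviallyNormedField 𝕜] [CompleteSpace 𝕜] [NormedAddCommGroup V]
  [NormedSpace 𝕜 V] [FiniteDimensional 𝕜 V]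

/-- The trace of endomorphisms of a finite-dimensional normed space, as a continuous linear
functional, so that it can be differentiated through. -/
def traceCLM : (V →L[𝕜] V) →L[𝕜] 𝕜 :=
  LinearMap.toContinuousLinearMap (LinearMap.trace 𝕜 V ∘ₗ ContinuousLinearMap.coeLM 𝕜)

variable {𝕜 V}

theorem traceCLM_mul_comm (S T : V →L[𝕜] V) : traceCLM 𝕜 V (S * T) = traceCLM 𝕜 V (T * S) :=
  LinearMap.trace_mul_comm 𝕜 (S : V →ₗ[𝕜] V) (T : V →ₗ[𝕜] V)

end Trace

section Nijenhuis

variable {N : E → E →L[ℝ] E} {x : E}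

theorem nijTorsion_eq (hN : DifferentiableAt ℝ N x) (u v : E) :
    nijTorsion N x u v = fderiv ℝ N x (N x u) v - fderiv ℝ N x (N x v) u
      + N x (fderiv ℝ N x v u) - N x (fderiv ℝ N x u v) := by
  have hconst : ∀ a b : E, fderiv ℝ (fun y => N y a) x b = fderiv ℝ N x b a := fun a b => by
    simp [fderiv_clm_apply hN (differentiableAt_const a)]
  simp [nijTorsion, lieVF, hconst]

theorem fderiv_apply_apply_of_nijTorsion_eq_zero (hN : DifferentiableAt ℝ N x) {u : E}
    (hT : ∀ v : E, nijTorsion N x u v = 0) :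
    fderiv ℝ N x (N x u) = N x * fderiv ℝ N x u + ⁅(fderiv ℝ N x).flip u, N x⁆ := by
  ext v
  rw [← sub_eq_zero, ← hT v, nijTorsion_eq hN]
  simp only [Ring.lie_def, add_apply, sub_apply, mul_apply_eq_comp,
    ContinuousLinearMap.flip_apply]
  abel

variable [FiniteDimensional ℝ E]

theorem fderiv_traceInv_succ (hN : DifferentiableAt ℝ N x) (k : ℕ) (v : E) :
    fderiv ℝ (traceInv N (k + 1)) x v = traceCLM ℝ E (N x ^ k * fderiv ℝ N x v) := by
  have hdiff : DifferentiableAt ℝ (fun y => traceCLM ℝ E (N y ^ (k + 1))) x := by fun_prop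
  have hk : ((k + 1 : ℕ) : ℝ) ≠ 0 := Nat.cast_ne_zero.2 k.succ_ne_zero
  calc fderiv ℝ (traceInv N (k + 1)) x v
      = ((k + 1 : ℕ) : ℝ)⁻¹ * fderiv ℝ (fun y => traceCLM ℝ E (N y ^ (k + 1))) x v :=
        congrArg (· v) (fderiv_const_mul hdiff _)
    _ = traceCLM ℝ E (N x ^ k * fderiv ℝ N x v) := by
        rw [fderiv_map_pow_of_map_mul_comm traceCLM_mul_comm hN, nsmul_eq_mul,
          inv_mul_cancel_left₀ hk, Nat.add_sub_cancel]

theorem isLenardChain_fderiv_traceInv (hN : DifferentiableAt ℝ N x)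
    (hT : ∀ u v : E, nijTorsion N x u v = 0) :
    IsLenardChain (N x : E →ₗ[ℝ] E)
      (fun k => (fderiv ℝ (traceInv N (k + 1)) x : E →ₗ[ℝ] ℝ)) := by
  intro k
  ext u
  calc fderiv ℝ (traceInv N (k + 1 + 1)) x u
      = traceCLM ℝ E (N x ^ k * (N x * fderiv ℝ N x u)) := by
        rw [fderiv_traceInv_succ hN, pow_succ, mul_assoc]
    _ = traceCLM ℝ E (N x ^ k * fderiv ℝ N x (N x u)) := by
        rw [fderiv_apply_apply_of_nijTorsion_eq_zero hN (hT u), mul_add, map_add,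
          map_mul_lie_eq_zero_of_commute traceCLM_mul_comm (Commute.pow_self (N x) k), add_zero]
    _ = fderiv ℝ (traceInv N (k + 1)) x (N x u) := (fderiv_traceInv_succ hN k _).symm

theorem traceInv_involution_of_isSelfAdjoint {ω : E →L[ℝ] E →L[ℝ] ℝ} (hω : ω.toBilinForm.IsAlt)
    (hN : DifferentiableAt ℝ N x) (hT : ∀ u v : E, nijTorsion N x u v = 0)
    (hadj : ω.toBilinForm.IsSelfAdjoint (N x)) {i j : ℕ} (hi : 1 ≤ i) (hj : 1 ≤ j) {z w : E}
    (hz : ∀ v : E, ω z v = fderiv ℝ (traceInv N i) x v)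
    (hw : ∀ v : E, ω w v = fderiv ℝ (traceInv N j) x v) : ω z w = 0 := by
  obtain ⟨i, rfl⟩ := Nat.exists_eq_add_of_le' hi
  obtain ⟨j, rfl⟩ := Nat.exists_eq_add_of_le' hj
  exact (isLenardChain_fderiv_traceInv hN hT).apply_eq_zero hω hadj
    (LinearMap.ext hz) (LinearMap.ext hw)

theorem traces_in_involution_general {ω₁ ω₂ : E →L[ℝ] E →L[ℝ] ℝ} (hω₁ : ∀ v : E, ω₁ v v = 0)
    (hω₂ : ∀ v : E, ω₂ v v = 0) (hN : DifferentiableAt ℝ N x)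
    (hNdef : ∀ u v : E, ω₂ (N x u) v = ω₁ u v) (hT : ∀ u v : E, nijTorsion N x u v = 0)
    {i j : ℕ} (hi : 1 ≤ i) (hj : 1 ≤ j) :
    (∀ z w : E, (∀ v : E, ω₁ z v = fderiv ℝ (traceInv N i) x v) →
      (∀ v : E, ω₁ w v = fderiv ℝ (traceInv N j) x v) → ω₁ z w = 0) ∧
    (∀ z w : E, (∀ v : E, ω₂ z v = fderiv ℝ (traceInv N i) x v) →
      (∀ v : E, ω₂ w v = fderiv ℝ (traceInv N j) x v) → ω₂ z w = 0) := by
  have hcomp : ω₁.toBilinForm = ω₂.toBilinForm ∘ₗ (N x : E →ₗ[ℝ] E) :=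
    LinearMap.ext₂ fun u v => (hNdef u v).symm
  have hadj₂ : ω₂.toBilinForm.IsSelfAdjoint (N x : E →ₗ[ℝ] E) :=
    isSelfAdjoint_of_isAlt_comp hω₂ (hcomp ▸ hω₁)
  have hadj₁ : ω₁.toBilinForm.IsSelfAdjoint (N x : E →ₗ[ℝ] E) :=
    hcomp ▸ isSelfAdjoint_comp hadj₂
  exact ⟨fun _ _ => traceInv_involution_of_isSelfAdjoint hω₁ hN hT hadj₁ hi hj,
    fun _ _ => traceInv_involution_of_isSelfAdjoint hω₂ hN hT hadj₂ hi hj⟩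

end Nijenhuis

/-- Let `ω₁` and `ω₂` be Magri-compatible symplectic forms on a smooth
manifold `M` with recursion operator `N = ω₂♯ ω₁♭` (i.e. `ω₂(Nu,v) = ω₁(u,v)`, and the
Nijenhuis torsion of `N` vanishes), and set `I_k = (1/k) Tr(N^k)`.  Then the functions
`I_k` are in involution with respect to both Poisson brackets:
`{I_i, I_j}₁ = {I_i, I_j}₂ = 0` for all `i, j ≥ 1`, where `{f, g} = ω(ω♯·df, ω♯·dg)`. -/
theorem traces_in_involution
    {E : Type*} [NormedAddCommGroup E] [NormedSpace ℝ E] [FiniteDimensional ℝ E]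
    (U : Set E) (hU : IsOpen U)
    (ω₁ : E → E →L[ℝ] E →L[ℝ] ℝ) (hω₁sm : ContDiffOn ℝ (⊤ : ℕ∞) ω₁ U)
    (hskew₁ : IsSkewOn ω₁ U) (hnd₁ : IsNondegOn ω₁ U) (hcl₁ : IsClosed2On ω₁ U)
    (ω₂ : E → E →L[ℝ] E →L[ℝ] ℝ) (hω₂sm : ContDiffOn ℝ (⊤ : ℕ∞) ω₂ U)
    (hskew₂ : IsSkewOn ω₂ U) (hnd₂ : IsNondegOn ω₂ U) (hcl₂ : IsClosed2On ω₂ U)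
    (N : E → E →L[ℝ] E) (hNsm : ContDiffOn ℝ (⊤ : ℕ∞) N U)
    (hNdef : ∀ x ∈ U, ∀ u v : E, ω₂ x (N x u) v = ω₁ x u v)
    (hMagri : ∀ x ∈ U, ∀ u v : E, nijTorsion N x u v = 0) :
    ∀ i j : ℕ, 1 ≤ i → 1 ≤ j → ∀ x ∈ U,
      (∀ z w : E, (∀ v : E, ω₁ x z v = fderiv ℝ (traceInv N i) x v) →
        (∀ v : E, ω₁ x w v = fderiv ℝ (traceInv N j) x v) → ω₁ x z w = 0) ∧
      (∀ z w : E, (∀ v : E, ω₂ x z v = fderiv ℝ (traceInv N i) x v) →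
        (∀ v : E, ω₂ x w v = fderiv ℝ (traceInv N j) x v) → ω₂ x z w = 0) := by
  intro i j hi hj x hx
  exact traces_in_involution_general (hskew₁ x hx) (hskew₂ x hx)
    ((hNsm.contDiffAt (hU.mem_nhds hx)).differentiableAt (by simp)) (hNdef x hx) (hMagri x hx) hi hj
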